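/- Let ζ = e^{πi/6}, ω = e^{2πi/3}, let G_35 = E_6 ⊂ GL_6(C) be generated by the six order-2 reflections s(α_1), ..., s(α_6) with simple roots α_1 = e_2 − e_3 + (1/√2)e_5 + √(3/2)e_6, α_2 = e_3 − e_4 − √2 e_5, α_3 = 2e_4, α_4 = e_3 − e_4 + √2 e_5, α_5 = e_2 − e_3 − (1/√2)e_5 − √(3/2)e_6, α_6 = e_1 − e_2 − e_3 − e_4, and let g = s(α_1)⋯s(α_6) be the Coxeter element. Let E be the ζ^4-eigenspace of g^4, a 3-dimensional subspace, N_E = {s ∈ G_35 : s(E) ⊆ E}, and π_E restriction to E. Then there exists a C-linear isomorphism ψ : E → C^3 such that ψ ∘ π_E(N_E) ∘ ψ^{−1} = G_25, where G_25 ⊂ GL_3(C) is generated by the three order-3 reflections s(β, ω) with roots β = (0,0,1)^T, (ω, ω^2, 1)^T, (1,0,0)^T. In other words, the 3-reflection subquotient of G_35 = E_6 is isomorphic to G_25. -/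

import Mathlib

open Matrix MvPolynomial

namespace Paper

noncomputable section

/-- The standard Hermitian inner product `(v, w) = Σ v_i conj(w_i)` on `ℂ^N`. -/
def herm {N : ℕ} (v w : Fin N → ℂ) : ℂ := ∑ i, v i * (starRingEnd ℂ) (w i)

/-- The reflection `s(v, λ) : w ↦ w - (1 - λ) ((w,v)/(v,v)) v` with root `v` and
nontrivial eigenvalue `λ`, as a matrix. -/
def reflMat {N : ℕ} (v : Fin N → ℂ) (lam : ℂ) : Matrix (Fin N) (Fin N) ℂ :=
  Matrix.of fun i j =>
    (if i = j then (1 : ℂ) else 0) - (1 - lam) * v i * (starRingEnd ℂ) (v j) / herm v v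

/-- The monomial matrix `ι(θ, σ)` with `e_i ↦ θ_{σ(i)} e_{σ(i)}`. -/
def monomialMatrix {N : ℕ} (θ : Fin N → ℂ) (σ : Equiv.Perm (Fin N)) :
    Matrix (Fin N) (Fin N) ℂ :=
  Matrix.of fun j i => if j = σ i then θ (σ i) else 0

/-- The imprimitive reflection group `G(m, p, N)`: all monomial `N × N` matrices whose
nonzero entries are `m`-th roots of unity and whose product of nonzero entries is an
`(m/p)`-th root of unity. -/
def Gimp (m p N : ℕ) : Set (Matrix (Fin N) (Fin N) ℂ) :=
  {M | ∃ (θ : Fin N → ℂ) (σ : Equiv.Perm (Fin N)),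
    (∀ i, θ i ^ m = 1) ∧ (∏ i, θ i) ^ (m / p) = 1 ∧ M = monomialMatrix θ σ}

/-- The `μ`-eigenspace of (the linear map of) a matrix. -/
def eigSpace {n : ℕ} (M : Matrix (Fin n) (Fin n) ℂ) (μ : ℂ) : Submodule ℂ (Fin n → ℂ) :=
  Module.End.eigenspace M.mulVecLin μ

def cC : Matrix (Fin 6) (Fin 6) ℤ :=
  !![2, -1, 0, 0, 0, 0; -1, 2, -1, 0, 0, 0; 0, -1, 2, -1, 0, -1; 0, 0, -1, 2, -1, 0; 0, 0, 0, -1, 2, 0; 0, 0, -1, 0, 0, 2]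

def cI : Matrix (Fin 6) (Fin 6) ℤ :=
  !![4, 5, 6, 4, 2, 3; 5, 10, 12, 8, 4, 6; 6, 12, 18, 12, 6, 9; 4, 8, 12, 10, 5, 6; 2, 4, 6, 5, 4, 3; 3, 6, 9, 6, 3, 6]

def gG : Matrix (Fin 6) (Fin 6) ℤ :=
  !![0, 0, 1, 0, -1, -1; 1, 0, 1, 0, -1, -1; 0, 1, 1, 0, -1, -1; 0, 0, 1, 0, -1, 0; 0, 0, 0, 1, -1, 0; 0, 0, 1, 0, 0, -1]

def gG2 : Matrix (Fin 6) (Fin 6) ℤ :=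
  !![0, 1, 0, -1, 0, 0; 0, 1, 1, -1, -1, -1; 1, 1, 1, -1, -1, -1; 0, 1, 1, -1, 0, -1; 0, 0, 1, -1, 0, 0; 0, 1, 0, 0, -1, 0]

def hH : Matrix (Fin 6) (Fin 6) ℤ :=
  !![0, 0, 0, 0, -1, 0; 1, 0, 0, 0, -1, -1; 1, 1, 0, -1, -1, -1; 1, 0, 1, -1, -1, -1; 1, 0, 0, 0, -1, 0; 0, 1, 0, 0, -1, -1]

def xX : Matrix (Fin 6) (Fin 6) ℤ :=
  !![-1, 0, 0, 1, 0, 0; -1, 1, 0, 0, 0, 0; -1, 0, -1, 0, 1, 0; -1, 0, 0, 0, 0, -1; -1, 0, 0, 0, 0, 0; 0, 0, 0, 0, 1, 0]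

def xI : Matrix (Fin 6) (Fin 6) ℤ :=
  !![0, 0, 0, 0, -1, 0; 0, 1, 0, 0, -1, 0; 0, 0, -1, 0, 1, 1; 1, 0, 0, 0, -1, 0; 0, 0, 0, 0, 0, 1; 0, 0, 0, -1, 1, 0]

def kK : Fin 3 → Matrix (Fin 6) (Fin 6) ℤ :=
  ![!![0, 0, 0, 0, -1, 1; 1, 0, 0, 0, -1, 1; 1, -1, 1, 0, -1, 1; 1, -1, 0, 1, -1, 1; 1, -1, 0, 0, 0, 1; 0, 0, 0, 0, 0, 1],
    !![1, 0, 0, 0, 0, 0; 1, 0, 0, 1, 0, -1; 0, 1, 0, 1, 0, -1; 0, 0, 0, 1, 0, 0; 0, 0, 0, 0, 1, 0; 0, 1, -1, 1, 0, 0],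
    !![1, 0, 0, 0, 0, 0; 0, 1, 0, 0, 0, 0; 0, 1, 0, -1, 1, 1; 0, 0, 1, -1, 1, 0; 0, 0, 0, 0, 1, 0; 0, 0, 0, 0, 0, 1]]

def f0 : Matrix (Fin 6) (Fin 3) ℤ :=
  !![0, -1, 0; 0, -2, -1; -1, -3, -1; -1, -2, -1; 0, -1, -1; 0, -2, 0]

def f1 : Matrix (Fin 6) (Fin 3) ℤ :=
  !![0, -1, -1; 0, -2, -1; -1, -2, -1; 0, -1, -1; 0, 0, -1; 0, -1, 0]

def l0 : Matrix (Fin 3) (Fin 6) ℤ :=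
  !![0, 0, -1, 2, -1, 0; 0, -1, 0, 0, 1, 1; -2, 1, 0, 0, 0, 0]

def l1 : Matrix (Fin 3) (Fin 6) ℤ :=
  !![0, 1, -2, 1, 0, 1; 0, -1, 0, 0, 1, 0; -1, 0, 0, 0, -1, 1]

def r0 : Fin 3 → Matrix (Fin 3) (Fin 3) ℤ :=
  ![!![3, 0, 0; 0, 3, 0; 0, 0, 0],
    !![2, 2, -1; -1, 2, 2; 2, -1, 2],
    !![0, 0, 0; 0, 3, 0; 0, 0, 3]]

def r1 : Fin 3 → Matrix (Fin 3) (Fin 3) ℤ :=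
  ![!![0, 0, 0; 0, 0, 0; 0, 0, 3],
    !![1, 1, -2; -2, 1, 1; 1, -2, 1],
    !![3, 0, 0; 0, 0, 0; 0, 0, 0]]

def rR : Fin 72 → Fin 6 → ℤ :=
  ![![-1, -1, -1, -1, -1, 0], ![0, 1, 1, 1, 1, 0], ![-1, -1, -2, -1, -1, -1], ![1, 0, 0, 0, 0, 0],
    ![0, 0, 1, 1, 1, 0], ![0, 0, -1, 0, 0, -1], ![-1, -2, -2, -1, -1, -1], ![-1, -1, -1, -1, -1, -1],
    ![1, 1, 1, 0, 0, 1], ![0, -1, 0, 0, 0, 0], ![0, 1, 2, 1, 1, 1], ![0, 0, 0, 0, 1, 0],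
    ![0, -1, -2, -1, -1, -1], ![0, 0, 0, 0, 0, -1], ![-1, -1, -1, 0, 0, -1], ![-1, -2, -2, -2, -1, -1],
    ![-1, -1, -2, -2, -1, -1], ![0, 1, 1, 0, 0, 1], ![1, 1, 0, 0, 0, 0], ![1, 1, 1, 1, 0, 1],
    ![-1, -1, 0, 0, 0, 0], ![0, -1, -1, -1, 0, 0], ![1, 1, 2, 1, 1, 1], ![0, 1, 1, 1, 1, 1],
    ![0, 0, 0, 1, 1, 0], ![0, -1, -1, -1, -1, 0], ![0, -1, -1, -1, -1, -1], ![0, 0, 1, 0, 0, 0],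
    ![0, 0, -1, -1, 0, -1], ![0, -1, -1, 0, 0, -1], ![-1, -1, -1, -1, 0, -1], ![-1, -2, -3, -2, -1, -1],
    ![-1, -2, -3, -2, -1, -2], ![1, 2, 2, 1, 1, 1], ![0, 1, 1, 1, 0, 1], ![0, 0, -1, -1, -1, 0],
    ![1, 1, 1, 1, 0, 0], ![1, 1, 2, 1, 0, 1], ![-1, 0, 0, 0, 0, 0], ![-1, -1, -1, -1, 0, 0],
    ![0, 0, -1, -1, 0, 0], ![0, -1, -1, 0, 0, 0], ![0, 0, 1, 0, 0, 1], ![1, 1, 1, 1, 1, 1],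
    ![0, 1, 2, 2, 1, 1], ![0, 0, 1, 1, 1, 1], ![0, 0, 0, -1, -1, 0], ![0, -1, -2, -2, -1, -1],
    ![0, 1, 1, 0, 0, 0], ![0, -1, -1, -1, 0, -1], ![-1, -1, -2, -1, 0, -1], ![1, 1, 1, 1, 1, 0],
    ![1, 2, 2, 2, 1, 1], ![0, 0, 0, 1, 0, 0], ![0, 1, 2, 1, 0, 1], ![0, 1, 0, 0, 0, 0],
    ![0, 0, 0, 0, -1, 0], ![1, 1, 1, 0, 0, 0], ![1, 2, 2, 1, 0, 1], ![-1, -1, -1, 0, 0, 0],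
    ![0, -1, -2, -1, 0, -1], ![0, 0, 0, 0, 0, 1], ![1, 1, 2, 2, 1, 1], ![0, 0, -1, -1, -1, -1],
    ![0, 0, 0, -1, 0, 0], ![-1, -2, -2, -1, 0, -1], ![1, 2, 3, 2, 1, 1], ![0, 0, 1, 1, 0, 1],
    ![0, 1, 1, 1, 0, 0], ![0, 0, -1, 0, 0, 0], ![1, 2, 3, 2, 1, 2], ![0, 0, 1, 1, 0, 0]]

def stepK : Fin 72 → Fin 3 :=
  ![0, 0, 1, 0, 1, 0, 1, 2, 1, 0, 1, 2, 0, 2, 0, 2, 2, 0, 1, 2, 0, 2, 0, 2, 2, 1, 2, 1, 2, 0, 2, 2, 1, 0, 2, 0, 2, 2, 1, 2, 1, 2, 0, 2, 2, 1, 1, 2, 1, 1, 2, 1, 2, 1, 2, 0, 2, 2, 1, 2, 1, 1, 2, 1, 1, 1, 2, 1, 1, 1, 1, 1]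

def stepP : Fin 72 → Fin 72 :=
  ![0, 0, 0, 1, 1, 2, 2, 2, 3, 4, 4, 4, 5, 5, 6, 6, 7, 8, 8, 8, 9, 9, 10, 10, 11, 12, 12, 13, 13, 14, 14, 15, 16, 17, 17, 18, 18, 19, 20, 20, 21, 21, 22, 22, 23, 24, 26, 26, 27, 28, 30, 33, 33, 34, 34, 35, 35, 36, 37, 39, 40, 41, 43, 46, 49, 50, 52, 53, 54, 61, 62, 68]

def dD : Fin 9 → Matrix (Fin 6) (Fin 6) ℤ :=
  ![!![1, 0, 0, 0, 0, 0; 0, 1, 0, 0, 0, 0; 0, 0, 1, 0, 0, 0; 0, 0, 0, 1, 0, 0; 0, 0, 0, 0, 1, 0; 0, 0, 0, 0, 0, 1],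
    !![1, 0, 0, 0, 0, 0; 0, 1, 0, 0, 0, 0; 0, 1, 0, -1, 1, 1; 0, 0, 1, -1, 1, 0; 0, 0, 0, 0, 1, 0; 0, 0, 0, 0, 0, 1],
    !![1, 0, 0, 0, 0, 0; 0, 1, 0, 0, 0, 0; 0, 1, -1, 1, 0, 1; 0, 1, -1, 0, 1, 1; 0, 0, 0, 0, 1, 0; 0, 0, 0, 0, 0, 1],
    !![1, 0, 0, 0, 0, -1; 0, 1, 0, 0, 0, -2; 0, 1, 1, 0, -1, -3; 0, 1, 0, 1, -1, -2; 0, 1, 0, 0, 0, -1; 0, 1, 0, 0, -1, -1],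
    !![1, 0, 0, 0, 0, -1; 0, 1, 0, 0, 0, -2; 0, 2, 0, -1, 0, -2; 0, 1, 1, -1, 0, -2; 0, 1, 0, 0, 0, -1; 0, 1, 0, 0, -1, -1],
    !![1, 0, 0, 0, 0, -1; 0, 1, 0, 0, 0, -2; 0, 2, -1, 1, -1, -2; 0, 2, -1, 0, 0, -1; 0, 1, 0, 0, 0, -1; 0, 1, 0, 0, -1, -1],
    !![1, -1, 0, 0, 1, 0; 0, -1, 0, 0, 2, 0; 0, -2, 1, 0, 2, -1; 0, -1, 0, 1, 1, -1; 0, 0, 0, 0, 1, -1; 0, -1, 0, 0, 1, 0],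
    !![1, -1, 0, 0, 1, 0; 0, -1, 0, 0, 2, 0; 0, -1, 0, -1, 3, 0; 0, -1, 1, -1, 2, -1; 0, 0, 0, 0, 1, -1; 0, -1, 0, 0, 1, 0],
    !![1, -1, 0, 0, 1, 0; 0, -1, 0, 0, 2, 0; 0, -1, -1, 1, 2, 0; 0, 0, -1, 0, 2, 0; 0, 0, 0, 0, 1, -1; 0, -1, 0, 0, 1, 0]]

def qQ : Fin 10 → Matrix (Fin 6) (Fin 6) ℤ :=
  ![!![0, 0, 0, 0, -1, 1; 1, 0, 0, 0, -1, 1; 1, -1, 1, 0, -1, 1; 1, -1, 0, 1, -1, 1; 1, -1, 0, 0, 0, 1; 0, 0, 0, 0, 0, 1],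
    !![0, 0, 0, 0, -1, 1; 1, -1, 0, 1, -2, 1; 2, -1, 0, 1, -2, 1; 1, -1, 0, 1, -1, 1; 1, -1, 0, 0, 0, 1; 1, 0, -1, 1, -1, 1],
    !![0, 1, -1, 1, -1, 0; 0, 1, -1, 1, -2, 1; 1, 1, -1, 1, -2, 1; 0, 1, -1, 1, -1, 1; 0, 1, -1, 0, 0, 1; 1, 0, -1, 1, -1, 1],
    !![1, -1, 0, 1, -1, 0; 1, 0, -1, 2, -2, 0; 2, 0, -1, 2, -2, 0; 1, 0, -1, 2, -1, 0; 1, 0, -1, 1, 0, 0; 1, 0, -1, 1, -1, 1],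
    !![1, -1, 0, 1, -1, 0; 1, -1, 0, 2, -1, -1; 1, 0, -1, 3, -2, -1; 1, 0, -1, 2, -1, 0; 1, 0, -1, 1, 0, 0; 0, 0, -1, 2, -1, 0],
    !![1, -1, 0, 1, -1, 0; 1, -1, 0, 2, -1, -1; 1, -1, -1, 3, -1, -1; 1, 0, -1, 2, -1, -1; 1, 0, -1, 1, 0, 0; 0, 0, -1, 2, -1, 0],
    !![1, -1, 0, 1, -1, 0; 2, -1, 0, 1, -1, -1; 2, -1, 0, 2, -1, -2; 1, 0, -1, 2, -1, -1; 1, 0, -1, 1, 0, 0; 1, 0, 0, 1, -1, -1],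
    !![0, 0, 1, 0, -1, -1; 1, -1, 1, 1, -2, -1; 1, -1, 1, 2, -2, -2; 0, 0, 0, 2, -2, -1; 0, 0, 0, 1, -1, 0; 1, 0, 0, 1, -1, -1],
    !![1, 0, 0, 0, 0, -1; 1, 0, 1, 0, -1, -2; 1, 0, 1, 1, -1, -3; 0, 1, 0, 1, -1, -2; 0, 1, 0, 0, 0, -1; 1, 0, 0, 1, -1, -1],
    !![1, 0, 0, 0, 0, -1; 0, 1, 0, 0, 0, -2; 0, 1, 1, 0, -1, -3; 0, 1, 0, 1, -1, -2; 0, 1, 0, 0, 0, -1; 0, 1, 0, 0, -1, -1]]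

def qL : Fin 10 → Fin 3 :=
  ![0, 1, 0, 0, 1, 2, 1, 0, 0, 1]

def x1 : Fin 6 → ℤ :=
  ![-1, -1, -1, -1, -1, 0]

def x2 : Fin 6 → ℤ :=
  ![0, 1, 0, 0, 0, 0]

def x3 : Fin 6 → ℤ :=
  ![0, 0, -1, 0, 0, 0]

def uU : Fin 6 → ℤ :=
  ![-2, -1, 0, -2, -1, 0]

def tT : Matrix (Fin 6) (Fin 6) ℤ :=
  !![1, 0, 0, 0, 1, 0; -1, 1, 0, 0, 1, 1; -1, -1, 1, 1, 1, 1; -1, 0, -1, 2, 1, 1; -1, 0, 0, 0, 2, 0; 0, -1, 0, 0, 1, 2]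

def p1 : Fin 6 → ℤ :=
  ![-1, 0, 0, 0, -1, 1]

def p2 : Fin 6 → ℤ :=
  ![2, -1, 0, 0, 0, 0]

def cH : Matrix (Fin 6) (Fin 6) ℤ :=
  !![-1, 0, 0, 0, -1, 1; 1, -1, 0, 1, 0, -1; 0, 1, -1, -1, 1, 1; 0, -1, 2, -1, 0, -1; 1, 0, -1, 1, -1, 1; -1, 1, 0, 1, -1, -1]

def zZ : Fin 6 → Fin 6 → ℤ :=
  ![![1, 0, 0, 0, 0, 0], ![0, 0, 0, 0, 0, 0], ![0, 0, -1, 0, 0, 0], ![0, 0, 0, 1, 0, 0], ![0, 0, 0, 0, 0, 0], ![0, 0, 0, 0, 0, 0]]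

def sP : Fin 6 → Fin 72 → Fin 72 :=
  ![![25, 51, 12, 38, 4, 5, 6, 26, 17, 20, 22, 11, 2, 13, 29, 15, 47, 8, 55, 34, 9, 39, 10, 43, 24, 0, 7, 27, 28, 14, 49, 31, 32, 33, 19, 35, 68, 54, 3, 21, 40, 59, 42, 23, 62, 45, 46, 16, 57, 30, 60, 1, 52, 53, 37, 18, 56, 48, 58, 41, 50, 61, 44, 63, 64, 65, 66, 67, 36, 69, 70, 71],
    ![0, 4, 6, 18, 1, 29, 2, 7, 8, 55, 10, 11, 12, 13, 14, 16, 15, 42, 3, 19, 38, 40, 33, 45, 24, 35, 63, 48, 49, 5, 30, 31, 32, 22, 67, 25, 36, 58, 20, 39, 21, 69, 17, 43, 44, 23, 46, 47, 27, 28, 65, 51, 62, 53, 54, 9, 56, 57, 37, 59, 60, 61, 52, 26, 64, 50, 66, 34, 71, 41, 70, 68],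
    ![0, 1, 7, 3, 24, 13, 6, 2, 8, 41, 23, 11, 26, 5, 14, 31, 16, 17, 57, 37, 59, 21, 43, 10, 4, 25, 12, 69, 28, 29, 50, 15, 32, 33, 54, 46, 36, 19, 38, 39, 64, 9, 61, 22, 44, 45, 35, 47, 55, 60, 30, 51, 66, 71, 34, 48, 56, 18, 58, 20, 49, 42, 62, 63, 40, 65, 52, 67, 68, 27, 70, 53],
    ![0, 1, 16, 3, 4, 28, 15, 7, 19, 9, 44, 24, 47, 13, 30, 6, 2, 34, 18, 8, 20, 41, 62, 23, 11, 25, 26, 71, 5, 49, 14, 31, 32, 52, 17, 35, 57, 37, 38, 59, 69, 21, 67, 43, 10, 45, 56, 12, 68, 29, 50, 51, 33, 64, 54, 55, 46, 36, 58, 39, 60, 61, 22, 63, 53, 65, 66, 42, 48, 40, 70, 27],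
    ![39, 68, 50, 3, 71, 5, 65, 30, 8, 9, 54, 56, 60, 13, 14, 15, 16, 17, 18, 43, 20, 25, 37, 34, 53, 21, 49, 27, 63, 29, 7, 31, 32, 58, 23, 40, 51, 22, 38, 0, 35, 41, 42, 19, 44, 67, 64, 47, 48, 26, 2, 36, 52, 24, 10, 55, 11, 57, 33, 59, 12, 61, 62, 28, 46, 6, 66, 45, 1, 69, 70, 4],
    ![7, 23, 2, 3, 45, 69, 6, 0, 57, 9, 10, 11, 12, 61, 59, 15, 16, 48, 18, 36, 20, 49, 22, 1, 24, 26, 25, 42, 40, 41, 39, 32, 31, 33, 68, 63, 19, 37, 38, 30, 28, 29, 27, 51, 44, 4, 46, 47, 17, 21, 50, 43, 52, 53, 54, 55, 56, 8, 58, 14, 60, 13, 62, 35, 64, 65, 70, 71, 34, 5, 66, 67]]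

def sS (i : Fin 6) : Matrix (Fin 6) (Fin 6) ℤ :=
  Matrix.of fun r c => (if r = c then 1 else 0) - (if r = i then cC i c else 0)

theorem cC_symm : cCᵀ = cC := by decide +kernel
theorem cC_diag : ∀ i, cC i i = 2 := by decide +kernel
theorem cC_inv : cC * cI = (3 : ℤ) • (1 : Matrix (Fin 6) (Fin 6) ℤ) := by decide +kernel
theorem gG_eq : sS 0 * sS 1 * sS 2 * sS 3 * sS 4 * sS 5 = gG := by decide +kernel
theorem gG2_eq : gG * gG = gG2 := by decide +kernel
theorem hH_eq : gG2 * gG2 = hH := by decide +kernel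
theorem xX_inv : xX * xI = 1 := by decide +kernel
theorem kK_cube : ∀ i, kK i * kK i * kK i = 1 := by decide +kernel
theorem kK_comm : ∀ i, kK i * hH = hH * kK i := by decide +kernel
theorem hH_f0 : hH * f0 = - f1 := by decide +kernel
theorem hH_f1 : hH * f1 = f0 - f1 := by decide +kernel
theorem lf0 : l0 * f0 - l1 * f1 = (-3 : ℤ) • (1 : Matrix (Fin 3) (Fin 3) ℤ) := by decide +kernel
theorem lf1 : l0 * f1 + l1 * f0 - l1 * f1 = 0 := by decide +kernel
/-- `F L = θ (H - ω²) = (1 + 2ω)(H + 1 + ω) = (H - 1) + ω (2H + 1)`. -/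
theorem fl0 : f0 * l0 - f1 * l1 = hH - 1 := by decide +kernel
theorem fl1 : f0 * l1 + f1 * l0 - f1 * l1 = (2 : ℤ) • hH + 1 := by decide +kernel
theorem kf0 : ∀ i, (3 : ℤ) • (kK i * f0) = f0 * r0 i - f1 * r1 i := by decide +kernel
theorem kf1 : ∀ i, (3 : ℤ) • (kK i * f1) = f0 * r1 i + f1 * r0 i - f1 * r1 i := by decide +kernel
theorem kw0 : kK 0 = sS 0 * (sS 1 * (sS 2 * (sS 3 * (sS 4 * (sS 3 * (sS 2 * sS 1)))))) := by
  decide +kernel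
theorem kw1 : kK 1 = sS 1 * (sS 2 * (sS 5 * sS 2)) := by decide +kernel
theorem kw2 : kK 2 = sS 2 * sS 3 := by decide +kernel
theorem sS_root : ∀ i n, sS i *ᵥ rR n = rR (sP i n) := by decide +kernel
theorem rR0 : rR 0 = x1 := by decide +kernel
theorem step_ok : ∀ n : Fin 72, n ≠ 0 → stepP n < n ∧ kK (stepK n) *ᵥ rR n = rR (stepP n) := by
  decide +kernel
theorem sS_u : ∀ i, sS i *ᵥ uU = uU + (3 : ℤ) • zZ i := by decide +kernel
theorem sS_form : ∀ i, (sS i)ᵀ * cC * sS i = cC := by decide +kernel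
theorem dD0 : dD 0 = 1 := by decide +kernel
theorem dD1 : dD 1 = kK 2 * dD 0 := by decide +kernel
theorem dD2 : dD 2 = kK 2 * dD 1 := by decide +kernel
theorem dD3 : dD 3 = qQ 9 * dD 0 := by decide +kernel
theorem dD4 : dD 4 = kK 2 * dD 3 := by decide +kernel
theorem dD5 : dD 5 = kK 2 * dD 4 := by decide +kernel
theorem dD6 : dD 6 = qQ 9 * dD 3 := by decide +kernel
theorem dD7 : dD 7 = kK 2 * dD 6 := by decide +kernel
theorem dD8 : dD 8 = kK 2 * dD 7 := by decide +kernel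
theorem qQ0 : qQ 0 = kK (qL 0) := by decide +kernel
theorem qQ_step : ∀ n : Fin 9, qQ n.succ = kK (qL n.succ) * qQ n.castSucc := by decide +kernel
theorem dD_x1 : ∀ d, dD d *ᵥ x1 = x1 := by decide +kernel
theorem key : ∀ n : Fin 72, rR n ⬝ᵥ p1 = 0 → rR n ⬝ᵥ p2 = 0 →
    (∀ i, 3 ∣ (tT *ᵥ (rR n - x3)) i) → ∀ m : Fin 72, rR m ⬝ᵥ p1 = 0 → rR m ⬝ᵥ p2 = -1 →
    rR n ⬝ᵥ (cC *ᵥ rR m) = 1 → rR n ⬝ᵥ (cH *ᵥ rR m) = -1 →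
    ∃ d, dD d *ᵥ x2 = rR m ∧ dD d *ᵥ x3 = rR n := by decide +kernel
theorem p1_eq : cC *ᵥ x1 = p1 := by decide +kernel
theorem p2_eq : cC *ᵥ (hH *ᵥ x1) = p2 := by decide +kernel
theorem cH_eq : cC * hH = cH := by decide +kernel
theorem uU_eq : tT *ᵥ (x1 - x3) = uU := by decide +kernel
theorem tT_eq : tT = 1 - hH := by decide +kernel
theorem x2p1 : x2 ⬝ᵥ p1 = 0 := by decide +kernel
theorem x2p2 : x2 ⬝ᵥ p2 = -1 := by decide +kernel
theorem x3p1 : x3 ⬝ᵥ p1 = 0 := by decide +kernel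
theorem x3p2 : x3 ⬝ᵥ p2 = 0 := by decide +kernel
theorem x3x2 : x3 ⬝ᵥ (cC *ᵥ x2) = 1 := by decide +kernel
theorem x3hx2 : x3 ⬝ᵥ (cH *ᵥ x2) = -1 := by decide +kernel
theorem x2r : ∃ n, x2 = rR n := by decide +kernel
theorem x3r : ∃ n, x3 = rR n := by decide +kernel
theorem xc0 : (fun i => xX i 0) = x1 := by decide +kernel
theorem xc1 : (fun i => xX i 1) = x2 := by decide +kernel
theorem xc2 : (fun i => xX i 2) = x3 := by decide +kernel
theorem xc3 : (fun i => xX i 3) = hH *ᵥ x1 := by decide +kernel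
theorem xc4 : (fun i => xX i 4) = hH *ᵥ x2 := by decide +kernel
theorem xc5 : (fun i => xX i 5) = hH *ᵥ x3 := by decide +kernel

/-- The invariants of the integral matrices of `W(E₆)` used in the argument: roots go to roots,
the form is preserved, and the action on weights modulo roots is trivial. -/
def WInv (N : Matrix (Fin 6) (Fin 6) ℤ) : Prop :=
  (∀ n, ∃ m, N *ᵥ rR n = rR m) ∧ Nᵀ * cC * N = cC ∧ ∃ z, N *ᵥ uU = uU + (3 : ℤ) • z

theorem WInv.mul {M N : Matrix (Fin 6) (Fin 6) ℤ} (hM : WInv M) (hN : WInv N) :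
    WInv (M * N) := by
  obtain ⟨a1, a2, z1, a3⟩ := hM
  obtain ⟨b1, b2, z2, b3⟩ := hN
  refine ⟨fun n => ?_, ?_, M *ᵥ z2 + z1, ?_⟩
  · obtain ⟨m, hm⟩ := b1 n
    obtain ⟨k, hk⟩ := a1 m
    exact ⟨k, by rw [← mulVec_mulVec, hm, hk]⟩
  · calc (M * N)ᵀ * cC * (M * N) = Nᵀ * (Mᵀ * cC * M) * N := by
          rw [transpose_mul]; simp only [Matrix.mul_assoc]
      _ = cC := by rw [a2, b2]
  · rw [← mulVec_mulVec, b3, mulVec_add, a3, mulVec_smul, smul_add]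
    abel

theorem WInv.one : WInv 1 :=
  ⟨fun n => ⟨n, by simp⟩, by simp, 0, by simp⟩

/-- The integral form of `W(E₆)`. -/
def WS : Submonoid (Matrix (Fin 6) (Fin 6) ℤ) := Submonoid.closure (Set.range sS)

/-- The integral form of the centralizer. -/
def WK : Submonoid (Matrix (Fin 6) (Fin 6) ℤ) := Submonoid.closure (Set.range kK)

theorem sS_mem (i) : sS i ∈ WS := Submonoid.subset_closure ⟨i, rfl⟩
theorem kK_mem (i) : kK i ∈ WK := Submonoid.subset_closure ⟨i, rfl⟩

theorem WS_inv {N} (h : N ∈ WS) : WInv N := by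
  induction h using Submonoid.closure_induction with
  | mem x hx =>
    obtain ⟨i, rfl⟩ := hx
    exact ⟨fun n => ⟨_, sS_root i n⟩, sS_form i, _, sS_u i⟩
  | one => exact WInv.one
  | mul x y _ _ hx hy => exact hx.mul hy

theorem WK_le : WK ≤ WS := by
  refine Submonoid.closure_le.2 ?_
  rintro _ ⟨i, rfl⟩
  fin_cases i
  · change kK 0 ∈ WS
    rw [kw0]
    iterate 7 refine mul_mem (sS_mem _) ?_
    exact sS_mem _
  · change kK 1 ∈ WS
    rw [kw1]
    iterate 3 refine mul_mem (sS_mem _) ?_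
    exact sS_mem _
  · change kK 2 ∈ WS
    rw [kw2]
    exact mul_mem (sS_mem _) (sS_mem _)

theorem WK_comm {N} (h : N ∈ WK) : N * hH = hH * N := by
  induction h using Submonoid.closure_induction with
  | mem x hx => obtain ⟨i, rfl⟩ := hx; exact kK_comm i
  | one => simp
  | mul x y _ _ hx hy => rw [Matrix.mul_assoc, hy, ← Matrix.mul_assoc, hx, Matrix.mul_assoc]

theorem transport (n : Fin 72) : ∃ k ∈ WK, ∃ k' ∈ WK, k * k' = 1 ∧ k' *ᵥ rR n = x1 := by
  induction n using WellFoundedLT.induction with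
  | ind n ih =>
    by_cases hn : n = 0
    · subst hn
      exact ⟨1, one_mem _, 1, one_mem _, by simp, by simp [rR0]⟩
    · obtain ⟨h1, h2⟩ := step_ok n hn
      obtain ⟨k, hk, k', hk', e, f⟩ := ih _ h1
      set s := kK (stepK n) with hs
      have hsm : s ∈ WK := kK_mem _
      refine ⟨s * s * k, mul_mem (mul_mem hsm hsm) hk, k' * s, mul_mem hk' hsm, ?_, ?_⟩
      · calc s * s * k * (k' * s) = s * s * (k * k') * s := by simp only [Matrix.mul_assoc]
          _ = 1 := by rw [e, Matrix.mul_one, hs, kK_cube]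
      · rw [← mulVec_mulVec, h2, f]

theorem qQ_mem (n : Fin 10) : qQ n ∈ WK := by
  induction n using Fin.induction with
  | zero => rw [qQ0]; exact kK_mem _
  | succ i ih => rw [qQ_step]; exact mul_mem (kK_mem _) ih

theorem dD_mem (d : Fin 9) : dD d ∈ WK := by
  have h0 : dD 0 ∈ WK := by rw [dD0]; exact one_mem _
  have h1 : dD 1 ∈ WK := by rw [dD1]; exact mul_mem (kK_mem _) h0
  have h2 : dD 2 ∈ WK := by rw [dD2]; exact mul_mem (kK_mem _) h1
  have h3 : dD 3 ∈ WK := by rw [dD3]; exact mul_mem (qQ_mem _) h0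
  have h4 : dD 4 ∈ WK := by rw [dD4]; exact mul_mem (kK_mem _) h3
  have h5 : dD 5 ∈ WK := by rw [dD5]; exact mul_mem (kK_mem _) h4
  have h6 : dD 6 ∈ WK := by rw [dD6]; exact mul_mem (qQ_mem _) h3
  have h7 : dD 7 ∈ WK := by rw [dD7]; exact mul_mem (kK_mem _) h6
  have h8 : dD 8 ∈ WK := by rw [dD8]; exact mul_mem (kK_mem _) h7
  fin_cases d <;> assumption

theorem eq_of_basis {N D : Matrix (Fin 6) (Fin 6) ℤ} (hN : N * hH = hH * N)
    (hD : D * hH = hH * D) (h1 : N *ᵥ x1 = D *ᵥ x1) (h2 : N *ᵥ x2 = D *ᵥ x2)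
    (h3 : N *ᵥ x3 = D *ᵥ x3) : N = D := by
  have hh : ∀ v, N *ᵥ v = D *ᵥ v → N *ᵥ (hH *ᵥ v) = D *ᵥ (hH *ᵥ v) := by
    intro v hv
    rw [mulVec_mulVec, mulVec_mulVec, hN, hD, ← mulVec_mulVec, ← mulVec_mulVec, hv]
  have hX : N * xX = D * xX := by
    have hc : ∀ j, N *ᵥ (fun i => xX i j) = D *ᵥ (fun i => xX i j) := by
      intro j
      fin_cases j
      · exact xc0 ▸ h1
      · exact xc1 ▸ h2
      · exact xc2 ▸ h3
      · exact xc3 ▸ hh _ h1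
      · exact xc4 ▸ hh _ h2
      · exact xc5 ▸ hh _ h3
    ext i j
    exact congrFun (hc j) i
  calc N = N * xX * xI := by rw [Matrix.mul_assoc, xX_inv, Matrix.mul_one]
    _ = D := by rw [hX, Matrix.mul_assoc, xX_inv, Matrix.mul_one]

theorem form_apply {N : Matrix (Fin 6) (Fin 6) ℤ} (h : Nᵀ * cC * N = cC) (v w : Fin 6 → ℤ) :
    (N *ᵥ v) ⬝ᵥ (cC *ᵥ (N *ᵥ w)) = v ⬝ᵥ (cC *ᵥ w) := by
  conv_rhs => rw [← h]
  rw [← mulVec_mulVec, ← mulVec_mulVec, dotProduct_mulVec v, vecMul_transpose]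

theorem mem_WK_of_fix {N : Matrix (Fin 6) (Fin 6) ℤ} (hI : WInv N) (hH' : N * hH = hH * N)
    (h1 : N *ᵥ x1 = x1) : N ∈ WK := by
  obtain ⟨hr, hf, z, hz⟩ := hI
  obtain ⟨m0, hm0⟩ := x2r
  obtain ⟨n0, hn0⟩ := x3r
  obtain ⟨m, hm⟩ := hr m0
  obtain ⟨n, hn⟩ := hr n0
  rw [← hm0] at hm
  rw [← hn0] at hn
  have hcomm : ∀ v, N *ᵥ (hH *ᵥ v) = hH *ᵥ (N *ᵥ v) := by
    intro v; rw [mulVec_mulVec, mulVec_mulVec, hH']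
  have q1 : ∀ v, (N *ᵥ v) ⬝ᵥ p1 = v ⬝ᵥ p1 := by
    intro v
    have := form_apply hf v x1
    rwa [h1, p1_eq] at this
  have q2 : ∀ v, (N *ᵥ v) ⬝ᵥ p2 = v ⬝ᵥ p2 := by
    intro v
    have := form_apply hf v (hH *ᵥ x1)
    rwa [hcomm, h1, p2_eq] at this
  have q3 : (N *ᵥ x3) ⬝ᵥ (cH *ᵥ (N *ᵥ x2)) = x3 ⬝ᵥ (cH *ᵥ x2) := by
    have := form_apply hf x3 (hH *ᵥ x2)
    rw [hcomm] at this
    simpa only [← cH_eq, ← mulVec_mulVec] using this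
  have hu : tT *ᵥ (rR n - x3) = (3 : ℤ) • (-z) := by
    have e1 : N *ᵥ uU = tT *ᵥ (x1 - rR n) := by
      have hc : N * tT = tT * N := by
        rw [tT_eq, Matrix.mul_sub, Matrix.sub_mul, hH', Matrix.mul_one, Matrix.one_mul]
      rw [← uU_eq, mulVec_mulVec, hc, ← mulVec_mulVec, mulVec_sub, h1, hn]
    have e2 : tT *ᵥ (rR n - x3) = uU - N *ᵥ uU := by
      rw [e1, ← uU_eq, ← mulVec_sub]; congr 1; abel
    rw [e2, hz]; simp
  obtain ⟨d, hd2, hd3⟩ := key n (by rw [← hn, q1, x3p1]) (by rw [← hn, q2, x3p2])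
    (fun i => ⟨(-z) i, by rw [hu]; simp⟩) m (by rw [← hm, q1, x2p1]) (by rw [← hm, q2, x2p2])
    (by rw [← hm, ← hn, form_apply hf, x3x2]) (by rw [← hm, ← hn, q3, x3hx2])
  have : N = dD d := eq_of_basis hH' (WK_comm (dD_mem d)) (by rw [h1, dD_x1])
    (by rw [hm, hd2]) (by rw [hn, hd3])
  rw [this]
  exact dD_mem d

theorem mem_WK {N : Matrix (Fin 6) (Fin 6) ℤ} (hN : N ∈ WS) (hH' : N * hH = hH * N) :
    N ∈ WK := by
  obtain ⟨n, hn⟩ := (WS_inv hN).1 0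
  obtain ⟨k, hk, k', hk', e, f⟩ := transport n
  have h0 : k' * N ∈ WK := by
    refine mem_WK_of_fix (WS_inv (mul_mem (WK_le hk') hN)) ?_ ?_
    · rw [Matrix.mul_assoc, hH', ← Matrix.mul_assoc, WK_comm hk', Matrix.mul_assoc]
    · rw [← mulVec_mulVec, ← rR0, hn, f, rR0]
  have : N = k * (k' * N) := by rw [← Matrix.mul_assoc, e, Matrix.one_mul]
  rw [this]
  exact mul_mem hk h0

/-- Cast of an integral matrix to a complex one. -/
noncomputable def cst {m n : ℕ} (A : Matrix (Fin m) (Fin n) ℤ) : Matrix (Fin m) (Fin n) ℂ :=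
  A.map (Int.castRingHom ℂ)

theorem cst_mul {l m n : ℕ} (A : Matrix (Fin l) (Fin m) ℤ) (B : Matrix (Fin m) (Fin n) ℤ) :
    cst (A * B) = cst A * cst B := Matrix.map_mul

theorem cst_one {n : ℕ} : cst (1 : Matrix (Fin n) (Fin n) ℤ) = 1 := by
  simp [cst]

theorem cst_add {m n : ℕ} (A B : Matrix (Fin m) (Fin n) ℤ) : cst (A + B) = cst A + cst B := by
  ext; simp [cst]

theorem cst_sub {m n : ℕ} (A B : Matrix (Fin m) (Fin n) ℤ) : cst (A - B) = cst A - cst B := by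
  ext; simp [cst]

theorem cst_neg {m n : ℕ} (A : Matrix (Fin m) (Fin n) ℤ) : cst (-A) = -cst A := by
  ext; simp [cst]

theorem cst_smul {m n : ℕ} (c : ℤ) (A : Matrix (Fin m) (Fin n) ℤ) :
    cst (c • A) = (c : ℂ) • cst A := by
  ext; simp [cst]

theorem cst_inj {m n : ℕ} {A B : Matrix (Fin m) (Fin n) ℤ} (h : cst A = cst B) : A = B := by
  ext i j
  have := congrFun (congrFun h i) j
  simpa [cst] using this

/-- The Eisenstein matrix `A + ω B`. -/
noncomputable def eis {m n : ℕ} (w : ℂ) (A B : Matrix (Fin m) (Fin n) ℤ) :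
    Matrix (Fin m) (Fin n) ℂ := cst A + w • cst B

theorem eis_mul {l m n : ℕ} {w : ℂ} (hw : w ^ 2 + w + 1 = 0) (A B : Matrix (Fin l) (Fin m) ℤ)
    (C D : Matrix (Fin m) (Fin n) ℤ) :
    eis w A B * eis w C D = eis w (A * C - B * D) (A * D + B * C - B * D) := by
  simp only [eis, cst_sub, cst_add, cst_mul, Matrix.add_mul, Matrix.mul_add, Matrix.smul_mul,
    Matrix.mul_smul]
  generalize cst B * cst D = P
  linear_combination (norm := module) hw • P

theorem cst_mul_eis {l m n : ℕ} {w : ℂ} (A : Matrix (Fin l) (Fin m) ℤ)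
    (C D : Matrix (Fin m) (Fin n) ℤ) : cst A * eis w C D = eis w (A * C) (A * D) := by
  simp only [eis, cst_mul, Matrix.mul_add, Matrix.mul_smul]

theorem eis_inj {m n : ℕ} {w : ℂ} (hw : w.im ≠ 0) {A B : Matrix (Fin m) (Fin n) ℤ}
    (h : eis w A B = 0) : A = 0 ∧ B = 0 := by
  have hB : B = 0 := by
    ext i j
    have := congrArg Complex.im (congrFun (congrFun h i) j)
    simpa [eis, cst, hw] using this
  subst hB
  refine ⟨?_, rfl⟩
  ext i j
  have := congrFun (congrFun h i) j
  simpa [eis, cst] using this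

section complexPart

variable {w : ℂ}

theorem hF (hw : w ^ 2 + w + 1 = 0) : cst hH * eis w f0 f1 = w • eis w f0 f1 := by
  have h2 : w * w = -1 - w := by linear_combination hw
  rw [cst_mul_eis, hH_f0, hH_f1]
  simp only [eis, cst_sub, cst_neg, smul_add, smul_smul, h2]
  module

theorem lF (hw : w ^ 2 + w + 1 = 0) : eis w l0 l1 * eis w f0 f1 = (-3 : ℂ) • 1 := by
  rw [eis_mul hw, lf0, lf1]
  have h0 : cst (0 : Matrix (Fin 3) (Fin 3) ℤ) = 0 := by simp [cst]
  rw [eis, cst_smul, cst_one, h0, smul_zero, add_zero]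
  push_cast
  rfl

theorem Fl (hw : w ^ 2 + w + 1 = 0) :
    eis w f0 f1 * eis w l0 l1 = (1 + 2 * w) • (cst hH + (1 + w) • 1) := by
  have h2 : w * w = -1 - w := by linear_combination hw
  rw [eis_mul hw, fl0, fl1]
  simp only [eis, cst_sub, cst_add, cst_one, cst_smul, smul_add, smul_smul]
  have : (1 + 2 * w) * (1 + w) = -1 + w := by linear_combination 2 * hw
  rw [this]
  push_cast
  module

theorem kF (hw : w ^ 2 + w + 1 = 0) (i : Fin 3) :
    cst (kK i) * eis w f0 f1 = eis w f0 f1 * ((1 / 3 : ℂ) • eis w (r0 i) (r1 i)) := by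
  rw [Matrix.mul_smul, eis_mul hw, ← kf0, ← kf1, cst_mul_eis]
  simp only [eis, cst_smul, smul_add, smul_smul]
  push_cast
  module

theorem comm_of_F (hw : w ^ 2 + w + 1 = 0) (hi : w.im ≠ 0) {N : Matrix (Fin 6) (Fin 6) ℤ}
    {M' : Matrix (Fin 3) (Fin 3) ℂ} (h : cst N * eis w f0 f1 = eis w f0 f1 * M') :
    N * hH = hH * N := by
  have h1 : cst (N * hH - hH * N) * eis w f0 f1 = 0 := by
    rw [cst_sub, cst_mul, cst_mul, Matrix.sub_mul, Matrix.mul_assoc, Matrix.mul_assoc, hF hw, h,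
      ← Matrix.mul_assoc, hF hw, Matrix.mul_smul, h, Matrix.smul_mul, sub_self]
  rw [cst_mul_eis] at h1
  obtain ⟨h2, h3⟩ := eis_inj hi h1
  set Z := N * hH - hH * N with hZ
  have e0 : Z * (f0 * l0 - f1 * l1) = 0 := by
    rw [Matrix.mul_sub, ← Matrix.mul_assoc, ← Matrix.mul_assoc, h2, h3]; simp
  have e1 : Z * (f0 * l1 + f1 * l0 - f1 * l1) = 0 := by
    rw [Matrix.mul_sub, Matrix.mul_add, ← Matrix.mul_assoc, ← Matrix.mul_assoc,
      ← Matrix.mul_assoc, h2, h3]; simp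
  rw [fl0] at e0
  rw [fl1] at e1
  have e2 : (3 : ℤ) • Z = 0 := by
    have : (3 : ℤ) • Z = Z * ((2 : ℤ) • hH + 1) - (2 : ℤ) • (Z * (hH - 1)) := by
      simp only [Matrix.mul_add, Matrix.mul_sub, Matrix.mul_smul, Matrix.mul_one]
      module
    rw [this, e0, e1]; simp
  have e3 : Z = 0 := (smul_eq_zero.1 e2).resolve_left (by norm_num)
  exact sub_eq_zero.1 e3

theorem F_cancel (hw : w ^ 2 + w + 1 = 0) {n : ℕ} {A B : Matrix (Fin 3) (Fin n) ℂ}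
    (h : eis w f0 f1 * A = eis w f0 f1 * B) : A = B := by
  have := congrArg (fun T => eis w l0 l1 * T) h
  simp only [← Matrix.mul_assoc, lF hw, Matrix.smul_mul, Matrix.one_mul] at this
  have h3 : (-3 : ℂ) ≠ 0 := by norm_num
  exact smul_right_injective _ h3 this

end complexPart

theorem omega_facts {w : ℂ} (hw : w = Complex.exp (2 * Real.pi * Complex.I / 3)) :
    w ^ 2 + w + 1 = 0 ∧ w.im ≠ 0 ∧ (starRingEnd ℂ) w = -1 - w := by
  have hp : IsPrimitiveRoot w 3 := by
    rw [hw]; exact_mod_cast Complex.isPrimitiveRoot_exp 3 (by norm_num)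
  have h1 : w ^ 2 + w + 1 = 0 := by
    have := hp.geom_sum_eq_zero (by norm_num)
    simp only [Finset.sum_range_succ, Finset.sum_range_zero] at this
    linear_combination this
  have hc : w * (starRingEnd ℂ) w = 1 := by
    rw [Complex.mul_conj, Complex.normSq_eq_norm_sq, hp.norm'_eq_one (by norm_num)]
    simp
  have hc' : (starRingEnd ℂ) w = -1 - w := by
    have h3 := hp.pow_eq_one
    have h0 : w ≠ 0 := hp.ne_zero (by norm_num)
    apply mul_left_cancel₀ h0
    linear_combination hc + h1
  refine ⟨h1, ?_, hc'⟩
  intro him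
  have : (starRingEnd ℂ) w = w := Complex.conj_eq_iff_im.2 him
  rw [this] at hc'
  have h2 : w = -1 / 2 := by linear_combination hc' / 2
  rw [h2] at h1
  norm_num at h1

theorem refl_beta {w : ℂ} (hw : w ^ 2 + w + 1 = 0) (hc : (starRingEnd ℂ) w = -1 - w)
    (β : Fin 3 → (Fin 3 → ℂ))
    (hβ0 : β 0 = ![0, 0, 1])
    (hβ1 : β 1 = ![w, w ^ 2, 1])
    (hβ2 : β 2 = ![1, 0, 0]) (i : Fin 3) :
    reflMat (β i) w = (1 / 3 : ℂ) • eis w (r0 i) (r1 i) := by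
  have h2 : w ^ 2 = -1 - w := by linear_combination hw
  fin_cases i
  · ext j k
    fin_cases j <;> fin_cases k <;>
      simp [reflMat, herm, hβ0, eis, cst, r0, r1, Fin.sum_univ_succ] <;> ring
  · have hn : herm (β 1) (β 1) = 3 := by
      simp [herm, hβ1, Fin.sum_univ_succ, hc, h2]
      linear_combination (-2) * hw
    change reflMat (β 1) w = (1 / 3 : ℂ) • eis w (r0 1) (r1 1)
    ext j k
    simp only [reflMat, hn]
    fin_cases j <;> fin_cases k <;>
      simp [hβ1, eis, cst, r0, r1, hc, h2] <;> grind
  · ext j k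
    fin_cases j <;> fin_cases k <;>
      simp [reflMat, herm, hβ2, eis, cst, r0, r1, Fin.sum_univ_succ] <;> ring

theorem gram (a : Fin 6 → (Fin 6 → ℂ))
    (ha0 : a 0 = ![0, 1, -1, 0, 1 / (Real.sqrt 2 : ℂ), (Real.sqrt (3 / 2) : ℂ)])
    (ha1 : a 1 = ![0, 0, 1, -1, -(Real.sqrt 2 : ℂ), 0])
    (ha2 : a 2 = ![0, 0, 0, 2, 0, 0])
    (ha3 : a 3 = ![0, 0, 1, -1, (Real.sqrt 2 : ℂ), 0])
    (ha4 : a 4 = ![0, 1, -1, 0, -(1 / (Real.sqrt 2 : ℂ)), -(Real.sqrt (3 / 2) : ℂ)])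
    (ha5 : a 5 = ![1, -1, -1, -1, 0, 0]) (i j : Fin 6) :
    herm (a i) (a j) = 2 * (cC i j : ℂ) := by
  have hr : (Real.sqrt 2 : ℂ) * (Real.sqrt 2 : ℂ) = 2 := by
    rw [← Complex.ofReal_mul, Real.mul_self_sqrt (by norm_num)]; norm_num
  have hs : (Real.sqrt (3 / 2) : ℂ) * (Real.sqrt (3 / 2) : ℂ) = 3 / 2 := by
    rw [← Complex.ofReal_mul, Real.mul_self_sqrt (by norm_num)]; norm_num
  have cr : (starRingEnd ℂ) (Real.sqrt 2 : ℂ) = (Real.sqrt 2 : ℂ) := Complex.conj_ofReal _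
  have cs : (starRingEnd ℂ) (Real.sqrt (3 / 2) : ℂ) = (Real.sqrt (3 / 2) : ℂ) :=
    Complex.conj_ofReal _
  have c2 : (starRingEnd ℂ) (2 : ℂ) = 2 := map_ofNat _ 2
  generalize (Real.sqrt 2 : ℂ) = r at *
  generalize (Real.sqrt (3 / 2) : ℂ) = s at *
  have hri : 1 / r = r / 2 := by
    have : r ≠ 0 := by rintro rfl; simp at hr
    field_simp; linear_combination -hr
  rw [hri] at ha0 ha4
  have h00 : (r / 2) * (r / 2) = 1 / 2 := by linear_combination hr / 4
  fin_cases i <;> fin_cases j <;>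
    simp [herm, ha0, ha1, ha2, ha3, ha4, ha5, Fin.sum_univ_succ, cr, cs, c2, cC] <;> grind

theorem refl_A (a : Fin 6 → (Fin 6 → ℂ)) (hg : ∀ i j, herm (a i) (a j) = 2 * (cC i j : ℂ))
    (i : Fin 6) :
    reflMat (a i) (-1) * (Matrix.of fun r c => a c r) =
      (Matrix.of fun r c => a c r) * cst (sS i) := by
  ext r c
  have hd : herm (a i) (a i) = 4 := by rw [hg, cC_diag]; norm_num
  have hs : cC c i = cC i c := congrFun (congrFun cC_symm i) c
  have e := hg c i
  rw [hs] at e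
  simp only [Matrix.mul_apply, reflMat, hd, cst, sS, Matrix.of_apply, Matrix.map_apply,
    Int.coe_castRingHom, Int.cast_sub, Int.cast_ite, Int.cast_one, Int.cast_zero,
    sub_mul, mul_sub, ite_mul, mul_ite, one_mul, zero_mul, mul_one, mul_zero,
    Finset.sum_sub_distrib, Finset.sum_ite_eq, Finset.sum_ite_eq', Finset.mem_univ, if_true]
  have : ∑ k, (a i r / 4 * (starRingEnd ℂ) (a i k) * a c k) * 2 = a i r * cC i c := by
    have : ∑ k, (a i r / 4 * (starRingEnd ℂ) (a i k) * a c k) * 2 =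
        a i r / 2 * herm (a c) (a i) := by
      rw [herm, Finset.mul_sum]
      refine Finset.sum_congr rfl fun k _ => ?_
      ring
    rw [this, e]; ring
  rw [← this]
  congr 1
  refine Finset.sum_congr rfl fun k _ => ?_
  ring

theorem A_unit (a : Fin 6 → (Fin 6 → ℂ)) (hg : ∀ i j, herm (a i) (a j) = 2 * (cC i j : ℂ)) :
    IsUnit (Matrix.of fun r c => a c r : Matrix (Fin 6) (Fin 6) ℂ) := by
  set A : Matrix (Fin 6) (Fin 6) ℂ := Matrix.of fun r c => a c r with hA
  have h1 : Aᵀ * A.map (starRingEnd ℂ) = (2 : ℂ) • cst cC := by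
    ext i j
    have := hg i j
    simpa [hA, Matrix.mul_apply, cst, herm] using this
  have h2 : Aᵀ * (A.map (starRingEnd ℂ) * ((1 / 6 : ℂ) • cst cI)) = 1 := by
    rw [← Matrix.mul_assoc, h1, Matrix.smul_mul, Matrix.mul_smul, ← cst_mul, cC_inv, cst_smul,
      cst_one, smul_smul, smul_smul]
    norm_num
  have h3 : IsUnit Aᵀ := IsUnit.of_mul_eq_one _ h2
  exact (Matrix.isUnit_transpose A).1 h3

/-- The `3`-reflection subquotient of `G₃₅ = E₆` is isomorphic to `G₂₅`:
with `ζ = e^{πi/6}`, `ω = e^{2πi/3}`, the Coxeter element `g` of `E₆`, and `E` the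
`ζ^4`-eigenspace of `g^4` (a `3`-dimensional subspace), there is a `ℂ`-linear
isomorphism `ψ : E ≅ ℂ^3` conjugating `π_E(N_E)` onto `G₂₅`. -/
theorem statement_13 (ζ ω : ℂ) (hζ : ζ = Complex.exp (Real.pi * Complex.I / 6))
    (hω : ω = Complex.exp (2 * Real.pi * Complex.I / 3))
    (a : Fin 6 → (Fin 6 → ℂ))
    (ha0 : a 0 = ![0, 1, -1, 0, 1 / (Real.sqrt 2 : ℂ), (Real.sqrt (3 / 2) : ℂ)])
    (ha1 : a 1 = ![0, 0, 1, -1, -(Real.sqrt 2 : ℂ), 0])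
    (ha2 : a 2 = ![0, 0, 0, 2, 0, 0])
    (ha3 : a 3 = ![0, 0, 1, -1, (Real.sqrt 2 : ℂ), 0])
    (ha4 : a 4 = ![0, 1, -1, 0, -(1 / (Real.sqrt 2 : ℂ)), -(Real.sqrt (3 / 2) : ℂ)])
    (ha5 : a 5 = ![1, -1, -1, -1, 0, 0])
    (G35 : Submonoid (Matrix (Fin 6) (Fin 6) ℂ))
    (hG35 : G35 = Submonoid.closure {M | ∃ i : Fin 6, M = reflMat (a i) (-1)})
    (g : Matrix (Fin 6) (Fin 6) ℂ)
    (hg : g = reflMat (a 0) (-1) * reflMat (a 1) (-1) * reflMat (a 2) (-1) *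
      reflMat (a 3) (-1) * reflMat (a 4) (-1) * reflMat (a 5) (-1))
    (E : Submodule ℂ (Fin 6 → ℂ)) (hE : E = eigSpace (g ^ 4) (ζ ^ 4))
    (β : Fin 3 → (Fin 3 → ℂ))
    (hβ0 : β 0 = ![0, 0, 1])
    (hβ1 : β 1 = ![ω, ω ^ 2, 1])
    (hβ2 : β 2 = ![1, 0, 0])
    (G25 : Submonoid (Matrix (Fin 3) (Fin 3) ℂ))
    (hG25 : G25 = Submonoid.closure {M | ∃ i : Fin 3, M = reflMat (β i) ω}) :
    Module.finrank ℂ E = 3 ∧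
    ∃ Φ : (Fin 3 → ℂ) →ₗ[ℂ] (Fin 6 → ℂ), Function.Injective Φ ∧
      LinearMap.range Φ = E ∧
      (G25 : Set (Matrix (Fin 3) (Fin 3) ℂ)) =
        {M' | ∃ M ∈ G35, (∀ v ∈ E, M.mulVec v ∈ E) ∧
          ∀ t : Fin 3 → ℂ, M.mulVec (Φ t) = Φ (M'.mulVec t)} := by
  obtain ⟨hw, him, hcj⟩ := omega_facts hω
  have hζω : ζ ^ 4 = ω := by
    rw [hζ, hω, ← Complex.exp_nat_mul]; congr 1; push_cast; ring
  have hgram := gram a ha0 ha1 ha2 ha3 ha4 ha5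
  have hβ := refl_beta hw hcj β hβ0 hβ1 hβ2
  have hSA := refl_A a hgram
  have hAu := A_unit a hgram
  set A : Matrix (Fin 6) (Fin 6) ℂ := Matrix.of fun r c => a c r with hA
  obtain ⟨B, hAB, hBA⟩ : ∃ B, A * B = 1 ∧ B * A = 1 := isUnit_iff_exists.1 hAu
  clear_value A
  have hcanc : ∀ {n : ℕ} {X Y : Matrix (Fin 6) (Fin n) ℂ}, A * X = A * Y → X = Y := by
    intro n X Y h
    have := congrArg (fun T => B * T) h
    simpa only [← Matrix.mul_assoc, hBA, Matrix.one_mul] using this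
  -- transfer between `G35` and its integral form
  have t1 : ∀ M ∈ G35, ∃ N ∈ WS, M * A = A * cst N := by
    intro M hM
    rw [hG35] at hM
    induction hM using Submonoid.closure_induction with
    | mem x hx => obtain ⟨i, rfl⟩ := hx; exact ⟨sS i, sS_mem i, hSA i⟩
    | one => exact ⟨1, one_mem _, by simp [cst_one]⟩
    | mul x y _ _ hx hy =>
      obtain ⟨N1, h1, e1⟩ := hx
      obtain ⟨N2, h2, e2⟩ := hy
      exact ⟨N1 * N2, mul_mem h1 h2, by
        rw [Matrix.mul_assoc, e2, ← Matrix.mul_assoc, e1, cst_mul, Matrix.mul_assoc]⟩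
  have t2 : ∀ N ∈ WS, ∃ M ∈ G35, M * A = A * cst N := by
    intro N hN
    induction hN using Submonoid.closure_induction with
    | mem x hx =>
      obtain ⟨i, rfl⟩ := hx
      exact ⟨_, by rw [hG35]; exact Submonoid.subset_closure ⟨i, rfl⟩, hSA i⟩
    | one => exact ⟨1, one_mem _, by simp [cst_one]⟩
    | mul x y _ _ hx hy =>
      obtain ⟨N1, h1, e1⟩ := hx
      obtain ⟨N2, h2, e2⟩ := hy
      exact ⟨N1 * N2, mul_mem h1 h2, by
        rw [Matrix.mul_assoc, e2, ← Matrix.mul_assoc, e1, cst_mul, Matrix.mul_assoc]⟩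
  have hstep : ∀ {X Y : Matrix (Fin 6) (Fin 6) ℂ} {P Q : Matrix (Fin 6) (Fin 6) ℤ},
      X * A = A * cst P → Y * A = A * cst Q → X * Y * A = A * cst (P * Q) := by
    intro X Y P Q h1 h2
    rw [Matrix.mul_assoc, h2, ← Matrix.mul_assoc, h1, cst_mul, Matrix.mul_assoc]
  have hgA : g * A = A * cst gG := by
    rw [hg, ← gG_eq]
    exact hstep (hstep (hstep (hstep (hstep (hSA 0) (hSA 1)) (hSA 2)) (hSA 3)) (hSA 4)) (hSA 5)
  have hg4 : g ^ 4 * A = A * cst hH := by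
    have e : g ^ 4 = (g * g) * (g * g) := by
      rw [← pow_two, ← pow_two, ← pow_mul]
    rw [e, ← hH_eq, ← gG2_eq]
    exact hstep (hstep hgA hgA) (hstep hgA hgA)
  set F := eis ω f0 f1 with hFdef
  have hLF := lF hw
  have hFL := Fl hw
  have hHF := hF hw
  rw [← hFdef] at hLF hFL hHF
  have hinj : Function.Injective (A * F).mulVecLin := by
    intro s t hst
    have h1 : (A * F) *ᵥ s = (A * F) *ᵥ t := hst
    have h2 := congrArg (fun v => (eis ω l0 l1 * B) *ᵥ v) h1
    have h3 : eis ω l0 l1 * B * (A * F) = (-3 : ℂ) • 1 := by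
      rw [← hLF, Matrix.mul_assoc, ← Matrix.mul_assoc B, hBA, Matrix.one_mul]
    simp only [mulVec_mulVec, h3, smul_mulVec, one_mulVec] at h2
    exact smul_right_injective _ (by norm_num : (-3 : ℂ) ≠ 0) h2
  have hrange : LinearMap.range (A * F).mulVecLin = E := by
    rw [hE]
    ext v
    rw [eigSpace, Module.End.mem_eigenspace_iff, hζω]
    simp only [LinearMap.mem_range, Matrix.mulVecLin_apply]
    constructor
    · rintro ⟨t, rfl⟩
      rw [mulVec_mulVec, ← Matrix.mul_assoc, hg4, Matrix.mul_assoc, hHF, Matrix.mul_smul,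
        smul_mulVec]
    · intro hv
      have e1 : v = A *ᵥ (B *ᵥ v) := by rw [mulVec_mulVec, hAB, one_mulVec]
      set u := B *ᵥ v with hu
      have e2 : cst hH *ᵥ u = ω • u := by
        have : A *ᵥ (cst hH *ᵥ u) = A *ᵥ (ω • u) := by
          rw [mulVec_mulVec, ← hg4, ← mulVec_mulVec, ← e1, hv, mulVec_smul, ← e1]
        have := congrArg (fun v => B *ᵥ v) this
        simpa only [mulVec_mulVec, ← Matrix.mul_assoc, hBA, Matrix.one_mul, one_mulVec] using this
      have e3 : F *ᵥ (eis ω l0 l1 *ᵥ u) = (-3 : ℂ) • u := by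
        rw [mulVec_mulVec, hFL, smul_mulVec, add_mulVec, e2, smul_mulVec, one_mulVec, ← add_smul,
          smul_smul]
        congr 1
        linear_combination 4 * hw
      refine ⟨(-1 / 3 : ℂ) • (eis ω l0 l1 *ᵥ u), ?_⟩
      rw [mulVec_smul, ← mulVec_mulVec, e3, mulVec_smul, ← e1, smul_smul]
      norm_num
  refine ⟨?_, (A * F).mulVecLin, hinj, hrange, ?_⟩
  · rw [← hrange, LinearMap.finrank_range_of_inj hinj]; simp
  have hmat : ∀ {M : Matrix (Fin 6) (Fin 6) ℂ} {N : Matrix (Fin 6) (Fin 6) ℤ}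
      {M' : Matrix (Fin 3) (Fin 3) ℂ}, M * A = A * cst N →
      ((∀ t, M *ᵥ ((A * F).mulVecLin t) = (A * F).mulVecLin (M' *ᵥ t)) ↔
        cst N * F = F * M') := by
    intro M N M' hMN
    have e : (∀ t, M *ᵥ ((A * F).mulVecLin t) = (A * F).mulVecLin (M' *ᵥ t)) ↔
        M * (A * F) = A * F * M' := by
      simp only [Matrix.mulVecLin_apply, mulVec_mulVec]
      exact ⟨fun h => Matrix.ext_of_mulVec_single fun i => h _, fun h t => by rw [h]⟩
    rw [e, ← Matrix.mul_assoc, hMN, Matrix.mul_assoc, Matrix.mul_assoc]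
    exact ⟨fun h => hcanc h, fun h => by rw [h]⟩
  have hK : ∀ i, cst (kK i) * F = F * reflMat (β i) ω := by
    intro i; rw [hβ i]; exact kF hw i
  ext M'
  constructor
  · intro hM'
    have : ∃ N ∈ WK, cst N * F = F * M' := by
      rw [hG25] at hM'
      change M' ∈ Submonoid.closure _ at hM'
      induction hM' using Submonoid.closure_induction with
      | mem x hx => obtain ⟨i, rfl⟩ := hx; exact ⟨kK i, kK_mem i, hK i⟩
      | one => exact ⟨1, one_mem _, by simp [cst_one]⟩
      | mul x y _ _ hx hy =>
        obtain ⟨N1, h1, e1⟩ := hx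
        obtain ⟨N2, h2, e2⟩ := hy
        exact ⟨N1 * N2, mul_mem h1 h2, by
          rw [cst_mul, Matrix.mul_assoc, e2, ← Matrix.mul_assoc, e1, Matrix.mul_assoc]⟩
    obtain ⟨N, hN, e⟩ := this
    obtain ⟨M, hM, hMA⟩ := t2 N (WK_le hN)
    have hh := (hmat hMA).2 e
    refine ⟨M, hM, ?_, hh⟩
    intro v hv
    rw [← hrange] at hv ⊢
    obtain ⟨t, rfl⟩ := hv
    exact ⟨M' *ᵥ t, (hh t).symm⟩
  · rintro ⟨M, hM, -, hh⟩
    obtain ⟨N, hN, hMA⟩ := t1 M hM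
    have e := (hmat hMA).1 hh
    have hNK : N ∈ WK := mem_WK hN (comm_of_F hw him e)
    have : ∃ W ∈ G25, cst N * F = F * W := by
      clear e hMA hN
      induction hNK using Submonoid.closure_induction with
      | mem x hx =>
        obtain ⟨i, rfl⟩ := hx
        exact ⟨_, by rw [hG25]; exact Submonoid.subset_closure ⟨i, rfl⟩, hK i⟩
      | one => exact ⟨1, one_mem _, by simp [cst_one]⟩
      | mul x y _ _ hx hy =>
        obtain ⟨N1, h1, e1⟩ := hx
        obtain ⟨N2, h2, e2⟩ := hy
        exact ⟨N1 * N2, mul_mem h1 h2, by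
          rw [cst_mul, Matrix.mul_assoc, e2, ← Matrix.mul_assoc, e1, Matrix.mul_assoc]⟩
    obtain ⟨W, hW, e'⟩ := this
    have : M' = W := F_cancel hw (by rw [← hFdef, ← e, e'])
    rw [this]
    exact hW

end
end Paper
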